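/- Let C be a partition coalition structure of an ISCG, let j₁ be an agent in a coalition c ∈ C, and let allocations a and ā be such that ā = a ⊕ i₁→(j₁)→i₂ (i.e., j₁ moves from resource i₁ to resource i₂ and all other agents keep their resource). If |a_{i₁}| ≥ |a_{i₂}| + 2, then ā C-balance dominates a. -/

import Mathlib

/-!
Let `x = |a i₁|`. Passing from `a` to `abar` replaces the two loads `x` and `|a i₂| ≤ x - 2` by
`x - 1` and `|a i₂| + 1 ≤ x - 1`, and leaves every other load alone. So loads above `x` occur
equally often, while the load `x` occurs one time fewer in `abar`. For nonincreasing lists this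
forces the kernel to decrease lexicographically (`lex_of_count_lt`), which is the first
alternative of balance dominance; the coalition kernels are never compared.
-/

variable {N M : Type*} [Fintype N] [DecidableEq N] [Fintype M] [DecidableEq M]

/-- `a` is an allocation: resources hold pairwise disjoint sets of agents whose union is `N`. -/
def IsAllocation (a : M → Finset N) : Prop :=
  (∀ i₁ i₂ : M, i₁ ≠ i₂ → Disjoint (a i₁) (a i₂)) ∧ (∀ j : N, ∃ i : M, j ∈ a i)

/-- `a` respects the feasibility constraint `f`. -/
def Feasible (f a : M → Finset N) : Prop := ∀ i : M, a i ⊆ f i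

/-- Coalition `c` blocks allocation `a` via the (feasible) allocation `abar`. -/
def BlocksVia (f : M → Finset N) (c : Finset N) (a abar : M → Finset N) : Prop :=
  IsAllocation abar ∧ Feasible f abar ∧
  (∀ i : M, a i \ c = abar i \ c) ∧
  (∀ j ∈ c, ∀ i₁ i₂ : M, j ∈ a i₁ → j ∈ abar i₂ → (abar i₂).card ≤ (a i₁).card) ∧
  (∃ j ∈ c, ∃ i₁ i₂ : M, j ∈ a i₁ ∧ j ∈ abar i₂ ∧ (abar i₂).card < (a i₁).card)

/-- Coalition `c` blocks allocation `a`. -/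
def Blocks (f : M → Finset N) (c : Finset N) (a : M → Finset N) : Prop :=
  ∃ abar : M → Finset N, BlocksVia f c a abar

/-- The kernel of `a`: the list of resource cardinalities, in nonincreasing order. -/
def kernel (a : M → Finset N) : List ℕ :=
  ((Finset.univ.val.map fun i : M => (a i).card).sort (· ≤ ·)).reverse

/-- The `c`-kernel of `a`: the list `(|c ∩ a i|)_{i ∈ M}`, in nonincreasing order. -/
def ckernel (c : Finset N) (a : M → Finset N) : List ℕ :=
  ((Finset.univ.val.map fun i : M => (c ∩ a i).card).sort (· ≤ ·)).reverse

/-- The `c`-welfare-kernel of `a`: the list `(|c_n|, |c_{n-1}|, …, |c_1|)`, where `c_s` is the set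
of members of `c` assigned to a resource of cardinality `s`, and `n` is the number of agents. -/
def wkernel (c : Finset N) (a : M → Finset N) : List ℕ :=
  (List.range (Fintype.card N)).map fun t =>
    (c.filter fun j => ∃ i : M, j ∈ a i ∧ (a i).card = Fintype.card N - t).card

/-- `a` C-balance dominates `abar`. -/
def BalanceDominates (C : Set (Finset N)) (a abar : M → Finset N) : Prop :=
  List.Lex (· < ·) (kernel a) (kernel abar) ∨
  (kernel a = kernel abar ∧
    (∀ c ∈ C, ckernel c a = ckernel c abar ∨ List.Lex (· < ·) (ckernel c a) (ckernel c abar)) ∧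
    (∃ c ∈ C, List.Lex (· < ·) (ckernel c a) (ckernel c abar)))

/-- `C` is a partition coalition structure. -/
def IsPartitionStructure (C : Set (Finset N)) : Prop :=
  (∀ c ∈ C, c.Nonempty) ∧
  (∀ c ∈ C, ∀ c' ∈ C, c ≠ c' → Disjoint c c') ∧
  (∀ j : N, ∃ c ∈ C, j ∈ c)

/-- Two nonincreasing lists are compared lexicographically by the largest value at which their
multiplicities differ. -/
theorem lex_of_count_lt (x : ℕ) : ∀ l₁ l₂ : List ℕ, l₁.Pairwise (· ≥ ·) → l₂.Pairwise (· ≥ ·) →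
    l₁.count x < l₂.count x → (∀ y, x < y → l₁.count y = l₂.count y) →
    List.Lex (· < ·) l₁ l₂
  | _, [], _, _, h, _ => by simp at h
  | [], _ :: _, _, _, _, _ => List.Lex.nil
  | u :: t₁, v :: t₂, s₁, s₂, h, hy => by
    rcases lt_trichotomy u v with huv | rfl | huv
    · exact List.Lex.rel huv
    · refine List.Lex.cons (lex_of_count_lt x t₁ t₂ s₁.of_cons s₂.of_cons ?_ fun y hxy => ?_)
      · simpa [List.count_cons] using h
      · simpa [List.count_cons] using hy y hxy
    ·
      -- Every entry of the second list is at most `v < u`, so a value `≥ u` does not occur in it.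
      have absent : ∀ z, u ≤ z → (v :: t₂).count z = 0 := by
        intro z hz
        refine List.count_eq_zero.2 fun hmem => ?_
        rcases List.mem_cons.1 hmem with rfl | hmem
        · omega
        · have := List.rel_of_pairwise_cons s₂ hmem
          omega
      have hxu : x < u := by
        by_contra hle
        have := absent x (by omega)
        omega
      have h1 := hy u hxu
      rw [absent u le_rfl, List.count_cons_self] at h1
      omega

theorem kernel_pairwise {N M : Type*} [Fintype M] (a : M → Finset N) :
    (kernel a).Pairwise (· ≥ ·) := by
  unfold kernel
  rw [List.pairwise_reverse]
  exact Multiset.pairwise_sort _ _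

theorem count_kernel {N M : Type*} [Fintype M] (a : M → Finset N) (y : ℕ) :
    (kernel a).count y = (Finset.univ.val.map fun i : M => (a i).card).count y := by
  unfold kernel
  rw [List.count_reverse, ← Multiset.coe_count, Multiset.sort_eq]

/-- Splitting off two resources from the multiset of loads. -/
theorem count_kernel_split {N M : Type*} [Fintype M] [DecidableEq M] (a : M → Finset N)
    {i₁ i₂ : M} (hi : i₁ ≠ i₂) (y : ℕ) :
    (kernel a).count y = (((Finset.univ.erase i₁).erase i₂).val.map
        fun i : M => (a i).card).count y
      + (if y = (a i₂).card then 1 else 0) + (if y = (a i₁).card then 1 else 0) := by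
  rw [count_kernel, ← Finset.insert_erase (Finset.mem_univ i₁),
    Finset.insert_val_of_notMem (Finset.notMem_erase _ _), Multiset.map_cons,
    Multiset.count_cons]
  have h2 : i₂ ∈ Finset.univ.erase i₁ := by simp [hi.symm]
  conv_lhs => rw [← Finset.insert_erase h2,
    Finset.insert_val_of_notMem (Finset.notMem_erase _ _), Multiset.map_cons,
    Multiset.count_cons]
  simp

/-- Lemma 2(a): if `abar = a ⊕ i₁→(j₁)→i₂` and `|a i₁| ≥ |a i₂| + 2`, then `abar`
`C`-balance dominates `a`. -/
theorem move_balance_dominates_of_card_ge_add_two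
    {N M : Type*} [Fintype N] [DecidableEq N] [Fintype M] [DecidableEq M]
    (C : Set (Finset N)) (hC : IsPartitionStructure C)
    (c : Finset N) (hc : c ∈ C) (j₁ : N) (hj₁ : j₁ ∈ c)
    (i₁ i₂ : M) (hi : i₁ ≠ i₂)
    (a abar : M → Finset N) (ha : IsAllocation a) (habar : IsAllocation abar)
    (h₁ : j₁ ∈ a i₁) (h₂ : j₁ ∈ abar i₂)
    (hrest : ∀ j : N, j ≠ j₁ → ∀ i : M, j ∈ a i ↔ j ∈ abar i)
    (hcard : (a i₂).card + 2 ≤ (a i₁).card) :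
    BalanceDominates C abar a := by
  left
  have e₁ : abar i₁ = (a i₁).erase j₁ := by
    ext j
    by_cases hj : j = j₁
    · subst hj
      simpa using Finset.disjoint_right.1 (habar.1 i₁ i₂ hi) h₂
    · simp [hj, hrest j hj i₁]
  have e₂ : abar i₂ = insert j₁ (a i₂) := by
    ext j
    by_cases hj : j = j₁
    · subst hj
      simpa using h₂
    · simp [hj, hrest j hj i₂]
  have e₃ : ∀ i, i ≠ i₁ → i ≠ i₂ → abar i = a i := by
    intro i hi₁ hi₂
    ext j
    by_cases hj : j = j₁
    · subst hj
      exact iff_of_false (Finset.disjoint_right.1 (habar.1 i i₂ hi₂) h₂)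
        (Finset.disjoint_right.1 (ha.1 i i₁ hi₁) h₁)
    · exact (hrest j hj i).symm
  have c₁ : (abar i₁).card = (a i₁).card - 1 := by rw [e₁, Finset.card_erase_of_mem h₁]
  have c₂ : (abar i₂).card = (a i₂).card + 1 := by
    rw [e₂, Finset.card_insert_of_notMem (Finset.disjoint_left.1 (ha.1 i₁ i₂ hi) h₁)]
  have c₃ : (((Finset.univ.erase i₁).erase i₂).val.map fun i : M => (abar i).card)
      = (((Finset.univ.erase i₁).erase i₂).val.map fun i : M => (a i).card) := by
    refine Multiset.map_congr rfl fun i hmem => ?_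
    have hmem' : i ∈ (Finset.univ.erase i₁).erase i₂ := hmem
    simp only [Finset.mem_erase, Finset.mem_univ, and_true] at hmem'
    rw [e₃ i hmem'.2 hmem'.1]
  refine lex_of_count_lt (a i₁).card _ _ (kernel_pairwise _) (kernel_pairwise _) ?_
    fun y hy => ?_
  · rw [count_kernel_split abar hi, count_kernel_split a hi, c₁, c₂, c₃]
    split_ifs <;> omega
  · rw [count_kernel_split abar hi, count_kernel_split a hi, c₁, c₂, c₃]
    split_ifs <;> omega
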